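/- In the returning secretary problem with n ≥ 1 secretaries, the no-waiting algorithm hires the best secretary with probability at least 2/3; in particular this holds with no prior knowledge of n, since the no-waiting rule does not use n. -/

import Mathlib

/-!
Let `E j` (for `j ≥ 1`) be the event that both arrivals of `j` precede every arrival of the better
secretaries `0, …, j - 1`; the rule loses exactly when some `E j` occurs. Build the arrival order
by inserting the secretaries from best to worst: whether `E j` holds depends only on where the two
copies of `j` are inserted among the `2 * j + 2` arrivals present, namely on whether they take the
two front places, so the events are independent and `E j` has probability
`1 / ((j + 1) * (2 * j + 1))`. The product of the complementary probabilities telescopes to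
`(2 * n + 1) / (3 * n)`, which exceeds `2 / 3`.

Only the lower bound is needed, so it suffices that the insertion map `insertWorst` is injective
(`insertWorst_injective`) and keeps a winning order winning unless the new, worst secretary takes
the two front places (`noWaitWins_insertWorst`). This gives
`W (n + 1) ≥ ((2 * n + 2) * (2 * n + 1) - 2) * W n` for the number `W n` of winning orders
(`card_wins_succ`), and induction gives `(2 * n)! * (2 * n + 1) ≤ 3 * n * W n`.
-/

/-- The position of the first arrival of secretary `j`, when the arrival order is given by
`σ : Fin (2*n) ≃ Fin n × Fin 2` (mapping each of the `2*n` arrival positions to the pair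
(secretary, copy of the arrival)). -/
def firstArrival (n : ℕ) (σ : Fin (2 * n) ≃ Fin n × Fin 2) (j : Fin n) : Fin (2 * n) :=
  min (σ.symm (j, 0)) (σ.symm (j, 1))

/-- The position of the second arrival of secretary `j`. -/
def secondArrival (n : ℕ) (σ : Fin (2 * n) ≃ Fin n × Fin 2) (j : Fin n) : Fin (2 * n) :=
  max (σ.symm (j, 0)) (σ.symm (j, 1))

/-- The no-waiting algorithm wins: secretaries are ranked by their index (index `0`, the
best secretary, is the smallest).  The algorithm hires the best secretary iff for every
secretary `j` other than the best one it is *not* the case that `j`'s second arrival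
precedes the best secretary's first arrival while `j` is the best among all secretaries
that have had an arrival up to that moment. -/
def NoWaitWins (n : ℕ) (hn : 0 < n) (σ : Fin (2 * n) ≃ Fin n × Fin 2) : Prop :=
  ∀ j : Fin n, j ≠ ⟨0, hn⟩ →
    ¬ (secondArrival n σ j < firstArrival n σ ⟨0, hn⟩ ∧
        ∀ i : Fin n, firstArrival n σ i ≤ secondArrival n σ j → j ≤ i)

/-- Position of each arrival after a new worst secretary is inserted into the order `σ`: copy `0`
of the newcomer sits at `p`, copy `1` at the `q`-th (from `0`) position other than `p`, and the old arrivals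
fill the remaining positions in their old order. -/
def insertPos (n : ℕ) (p : Fin (2 * n + 2)) (q : Fin (2 * n + 1))
    (σ : Fin (2 * n) ≃ Fin n × Fin 2) (x : Fin (n + 1) × Fin 2) : Fin (2 * n + 2) :=
  Fin.lastCases (motive := fun _ => Fin (2 * n + 2)) (if x.2 = 0 then p else p.succAbove q)
    (fun i => p.succAbove (q.succAbove (σ.symm (i, x.2)))) x.1

section insertion

variable {n : ℕ} (p : Fin (2 * n + 2)) (q : Fin (2 * n + 1)) (σ : Fin (2 * n) ≃ Fin n × Fin 2)

lemma insertPos_last_zero : insertPos n p q σ (Fin.last n, 0) = p := by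
  simp [insertPos]

lemma insertPos_last_one : insertPos n p q σ (Fin.last n, 1) = p.succAbove q := by
  simp [insertPos]

lemma insertPos_castSucc (i : Fin n) (c : Fin 2) :
    insertPos n p q σ (i.castSucc, c) = p.succAbove (q.succAbove (σ.symm (i, c))) := by
  simp [insertPos]

lemma insertPos_injective : Function.Injective (insertPos n p q σ) := by
  rintro ⟨i, c⟩ ⟨j, d⟩ h
  induction i using Fin.lastCases with
  | last =>
    induction j using Fin.lastCases with
    | last =>
      fin_cases c <;> fin_cases d <;>
        simp_all [insertPos_last_zero, insertPos_last_one, Fin.succAbove_ne, Fin.ne_succAbove]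
    | cast j =>
      fin_cases c <;>
        simp_all [insertPos_last_zero, insertPos_last_one, insertPos_castSucc, Fin.ne_succAbove]
  | cast i =>
    induction j using Fin.lastCases with
    | last =>
      fin_cases d <;>
        simp_all [insertPos_last_zero, insertPos_last_one, insertPos_castSucc, Fin.succAbove_ne]
    | cast j => simpa [insertPos_castSucc] using h

lemma insertPos_bijective : Function.Bijective (insertPos n p q σ) := by
  refine (Fintype.bijective_iff_injective_and_card _).2 ⟨insertPos_injective p q σ, ?_⟩
  simp
  ring

/-- The arrival order of `n + 1` secretaries obtained from `σ` by inserting a new worst secretary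
as in `insertPos`. -/
noncomputable def insertWorst : Fin (2 * (n + 1)) ≃ Fin (n + 1) × Fin 2 :=
  (Equiv.ofBijective (insertPos n p q σ) (insertPos_bijective p q σ)).symm

lemma insertWorst_symm (x : Fin (n + 1) × Fin 2) :
    (insertWorst p q σ).symm x = insertPos n p q σ x := rfl

lemma strictMono_insert : StrictMono fun x : Fin (2 * n) => p.succAbove (q.succAbove x) :=
  (Fin.strictMono_succAbove p).comp (Fin.strictMono_succAbove q)

lemma firstArrival_insertWorst_castSucc (i : Fin n) :
    firstArrival (n + 1) (insertWorst p q σ) i.castSucc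
      = p.succAbove (q.succAbove (firstArrival n σ i)) := by
  simp only [firstArrival, insertWorst_symm, insertPos_castSucc]
  exact ((strictMono_insert p q).monotone.map_min).symm

lemma secondArrival_insertWorst_castSucc (i : Fin n) :
    secondArrival (n + 1) (insertWorst p q σ) i.castSucc
      = p.succAbove (q.succAbove (secondArrival n σ i)) := by
  simp only [secondArrival, insertWorst_symm, insertPos_castSucc]
  exact ((strictMono_insert p q).monotone.map_max).symm

lemma secondArrival_insertWorst_last :
    secondArrival (n + 1) (insertWorst p q σ) (Fin.last n) = max p (p.succAbove q) := by
  simp only [secondArrival, insertWorst_symm, insertPos_last_zero, insertPos_last_one]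

/-- The newcomer occupies the two front positions exactly when `(p, q)` is `(0, 0)` or `(1, 0)`;
otherwise the first of the old arrivals still comes before the newcomer's second one. -/
lemma insert_zero_le (hn : 0 < n) (h : (p, q) ∉ ({(0, 0), (1, 0)} : Finset _)) :
    p.succAbove (q.succAbove ⟨0, by omega⟩) ≤ max p (p.succAbove q) := by
  obtain ⟨p, hp⟩ := p
  obtain ⟨q, hq⟩ := q
  simp only [Finset.mem_insert, Finset.mem_singleton, Prod.mk.injEq, Fin.ext_iff, Fin.val_zero,
    Fin.val_one, not_or, not_and] at h
  simp only [le_max_iff, Fin.le_def, Fin.succAbove, Fin.lt_def, Fin.val_castSucc]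
  split_ifs <;> simp_all <;> omega

lemma noWaitWins_insertWorst (hn : 0 < n) (h : (p, q) ∉ ({(0, 0), (1, 0)} : Finset _))
    (hσ : NoWaitWins n hn σ) : NoWaitWins (n + 1) n.succ_pos (insertWorst p q σ) := by
  have h0 : (⟨0, n.succ_pos⟩ : Fin (n + 1)) = Fin.castSucc ⟨0, hn⟩ := rfl
  intro j hj ⟨h1, h2⟩
  rw [h0] at h1 hj
  induction j using Fin.lastCases with
  | last =>
    -- The earliest old arrival belongs to a secretary who beats the newcomer.
    have h3 := h2 (σ ⟨0, by omega⟩).1.castSucc (by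
      rw [firstArrival_insertWorst_castSucc, secondArrival_insertWorst_last]
      refine le_trans ?_ (insert_zero_le p q hn h)
      refine (strictMono_insert p q).monotone ?_
      have h4 : σ.symm ((σ ⟨0, by omega⟩).1, (σ ⟨0, by omega⟩).2) = ⟨0, by omega⟩ := by simp
      unfold firstArrival
      generalize σ ⟨0, by omega⟩ = x at h4 ⊢
      obtain ⟨i, c⟩ := x
      fin_cases c
      · exact (min_le_left _ _).trans h4.le
      · exact (min_le_right _ _).trans h4.le)
    exact absurd h3 (not_le.2 (Fin.castSucc_lt_last _))
  | cast j =>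
    rw [firstArrival_insertWorst_castSucc, secondArrival_insertWorst_castSucc] at h1
    refine hσ j (fun e => hj (e ▸ rfl)) ⟨(strictMono_insert p q).lt_iff_lt.1 h1, fun i hi => ?_⟩
    refine Fin.castSucc_le_castSucc_iff.1 (h2 i.castSucc ?_)
    rw [firstArrival_insertWorst_castSucc, secondArrival_insertWorst_castSucc]
    exact (strictMono_insert p q).monotone hi

end insertion

lemma insertWorst_injective {n : ℕ} {p p' : Fin (2 * n + 2)} {q q' : Fin (2 * n + 1)}
    {σ σ' : Fin (2 * n) ≃ Fin n × Fin 2} (h : insertWorst p q σ = insertWorst p' q' σ') :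
    p = p' ∧ q = q' ∧ σ = σ' := by
  have key (x) : insertPos n p q σ x = insertPos n p' q' σ' x := by
    rw [← insertWorst_symm, h, insertWorst_symm]
  have hp : p = p' := by simpa only [insertPos_last_zero] using key (Fin.last n, 0)
  subst hp
  have hq : q = q' := by simpa [insertPos_last_one] using key (Fin.last n, 1)
  subst hq
  refine ⟨rfl, rfl, ?_⟩
  rw [← σ.symm_symm, ← σ'.symm_symm]
  congr 1
  ext1 ⟨i, c⟩
  simpa [insertPos_castSucc] using key (i.castSucc, c)

lemma card_wins_succ (n : ℕ) (hn : 0 < n) :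
    (2 * n * (2 * n + 3)) * Nat.card {σ // NoWaitWins n hn σ}
      ≤ Nat.card {σ // NoWaitWins (n + 1) n.succ_pos σ} := by
  have hne : ((0, 0) : Fin (2 * n + 2) × Fin (2 * n + 1)) ≠ (1, 0) := by simp
  have hs : Nat.card {x : Fin (2 * n + 2) × Fin (2 * n + 1) //
      x ∈ ({(0, 0), (1, 0)} : Finset _)ᶜ} = 2 * n * (2 * n + 3) := by
    rw [Nat.card_eq_fintype_card, Fintype.card_coe, Finset.card_compl, Finset.card_pair hne,
      Fintype.card_prod, Fintype.card_fin, Fintype.card_fin, Nat.sub_eq_iff_eq_add (by nlinarith)]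
    ring
  rw [← hs, ← Nat.card_prod]
  refine Nat.card_le_card_of_injective (fun x => ⟨insertWorst x.1.1.1 x.1.1.2 x.2.1,
    noWaitWins_insertWorst _ _ _ hn (Finset.mem_compl.1 x.1.2) x.2.2⟩) ?_
  rintro ⟨⟨⟨p, q⟩, h⟩, σ, hσ⟩ ⟨⟨⟨p', q'⟩, h'⟩, σ', hσ'⟩ e
  obtain ⟨rfl, rfl, rfl⟩ := insertWorst_injective (Subtype.ext_iff.1 e)
  rfl

lemma card_orders (n : ℕ) : Nat.card (Fin (2 * n) ≃ Fin n × Fin 2) = (2 * n).factorial := by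
  have e : Fin (2 * n) ≃ Fin n × Fin 2 := Fintype.equivOfCardEq (by simp [mul_comm])
  rw [Nat.card_eq_fintype_card, Fintype.card_equiv e, Fintype.card_fin]

/-- The win probability is at least `(2 * n + 1) / (3 * n)`, with denominators cleared. -/
lemma factorial_mul_le_card_wins (n : ℕ) (hn : 0 < n) :
    (2 * n).factorial * (2 * n + 1) ≤ 3 * n * Nat.card {σ // NoWaitWins n hn σ} := by
  induction n, hn using Nat.le_induction with
  | base =>
    have h : Nat.card {σ // NoWaitWins 1 Nat.one_pos σ} = (2 * 1).factorial := by
      rw [← card_orders]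
      exact Nat.card_congr (Equiv.subtypeUnivEquiv fun σ j hj => absurd (Subsingleton.elim _ _) hj)
    rw [h]
    simp [Nat.factorial]
  | succ n hn ih =>
    have h := card_wins_succ n hn
    have hf : (2 * (n + 1)).factorial = (2 * n + 2) * ((2 * n + 1) * (2 * n).factorial) := rfl
    calc (2 * (n + 1)).factorial * (2 * (n + 1) + 1)
        = (2 * n + 2) * (2 * n + 3) * ((2 * n).factorial * (2 * n + 1)) := by rw [hf]; ring
      _ ≤ (2 * n + 2) * (2 * n + 3) * (3 * n * Nat.card {σ // NoWaitWins n hn σ}) := by gcongr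
      _ = 3 * (n + 1) * (2 * n * (2 * n + 3) * Nat.card {σ // NoWaitWins n hn σ}) := by ring
      _ ≤ _ := by gcongr

/-- **The returning secretary, no-waiting rule, no prior knowledge.** For `n ≥ 1`
secretaries, each arriving twice with the `2n` arrival events in uniformly random order,
the no-waiting algorithm (which makes no use of `n`) hires the best secretary with
probability at least `2/3`. -/
theorem returning_secretary_no_waiting_two_thirds (n : ℕ) (hn : 1 ≤ n) :
    (Nat.card {σ : Fin (2 * n) ≃ Fin n × Fin 2 // NoWaitWins n hn σ} : ℚ) /
      (Nat.card (Fin (2 * n) ≃ Fin n × Fin 2) : ℚ) ≥ 2 / 3 := by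
  have h := factorial_mul_le_card_wins n hn
  have hF : (0 : ℚ) < ((2 * n).factorial : ℚ) := by exact_mod_cast Nat.factorial_pos _
  rw [card_orders, ge_iff_le, div_le_div_iff₀ (by norm_num) hF]
  have h' : ((2 * n).factorial * (2 * n + 1) : ℚ)
      ≤ 3 * n * Nat.card {σ // NoWaitWins n hn σ} := by exact_mod_cast h
  have hn' : (0 : ℚ) < n := by exact_mod_cast hn
  refine le_of_mul_le_mul_right ?_ hn'
  linarith
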